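/- Let C be a conjugation on the complex Hilbert space K, let S be a bounded normal operator on K with S♭ = S, and let E be the spectral measure of S on 𝔖 = σ(S). For a Borel set A ⊆ 𝔖 the following are equivalent: (i) C∘E(A)∘C = E(A); (ii) E(A^c \ A) = 0; (iii) E(A \ A^c) = 0. -/

import Mathlib

open MeasureTheory
open scoped InnerProductSpace ComplexConjugate ENNReal

/-- A conjugation on a complex Hilbert space `K`. -/
structure IsConjugation {K : Type*} [NormedAddCommGroup K] [InnerProductSpace ℂ K]
    (C : K → K) : Prop where
  map_add : ∀ x y : K, C (x + y) = C x + C y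
  map_smul : ∀ (a : ℂ) (x : K), C (a • x) = (conj a) • C x
  invol : ∀ x : K, C (C x) = x
  inner_map : ∀ x y : K, ⟪C x, C y⟫_ℂ = conj ⟪x, y⟫_ℂ

/-- A (projection-valued) spectral measure on the Borel subsets of the set `𝔖 ⊆ ℂ`,
together with the family `μ` of its associated diagonal scalar measures
`μ ξ (A) = ⟨E(A)ξ, ξ⟩`. -/
structure IsSpectralMeasure {K : Type*} [NormedAddCommGroup K] [InnerProductSpace ℂ K]
    [CompleteSpace K] (𝔖 : Set ℂ) (E : Set ℂ → K →L[ℂ] K) (μ : K → Measure ℂ) : Prop where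
  selfAdjoint : ∀ A : Set ℂ, MeasurableSet A → A ⊆ 𝔖 → IsSelfAdjoint (E A)
  empty : E ∅ = 0
  univ : E 𝔖 = 1
  inter : ∀ A B : Set ℂ, MeasurableSet A → MeasurableSet B → A ⊆ 𝔖 → B ⊆ 𝔖 →
    E (A ∩ B) = E A ∘L E B
  countablyAdditive : ∀ (ξ η : K) (A : ℕ → Set ℂ), (∀ n, MeasurableSet (A n)) →
    (∀ n, A n ⊆ 𝔖) → Pairwise (Function.onFun Disjoint A) →
    HasSum (fun n => ⟪η, E (A n) ξ⟫_ℂ) ⟪η, E (⋃ n, A n) ξ⟫_ℂ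
  measure_eq : ∀ (ξ : K) (A : Set ℂ), MeasurableSet A → A ⊆ 𝔖 →
    μ ξ A = ENNReal.ofReal (⟪ξ, E A ξ⟫_ℂ).re
  measure_compl : ∀ ξ : K, μ ξ 𝔖ᶜ = 0

/-- The polarized integral `∫_𝔖 f dμ_{ξ,η}` of `f` against the complex measure
`μ_{ξ,η}(A) = ⟨E(A)ξ, η⟩`, expressed through the four diagonal (positive) measures. -/
noncomputable def specInt {K : Type*} [NormedAddCommGroup K] [InnerProductSpace ℂ K]
    (μ : K → Measure ℂ) (f : ℂ → ℂ) (ξ η : K) : ℂ :=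
  (4 : ℂ)⁻¹ * (((∫ z, f z ∂(μ (ξ + η))) - ∫ z, f z ∂(μ (ξ - η)))
    + Complex.I * ((∫ z, f z ∂(μ (ξ + Complex.I • η))) - ∫ z, f z ∂(μ (ξ - Complex.I • η))))

/-- The image `A^c = {conj z : z ∈ A}` of a subset of `ℂ` under complex conjugation. -/
def conjSet (A : Set ℂ) : Set ℂ := (fun z => conj z) '' A

/-!
Both `E` and `A ↦ E(A^c)♭` are projection-valued measures with integral `S = S♭`, so the point is
that a projection-valued measure is determined by the integral of an injective bounded continuous
function. Since integration against a projection-valued measure is multiplicative, the bounded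
continuous functions with the same integral against two such measures form a star subalgebra, and a
star subalgebra that separates points determines finite measures. Therefore `E(A)♭ = E(A^c)`, and
`E(A) = E(A^c)` holds exactly when `E` vanishes on both differences, which `♭` interchanges.
-/

open Filter Topology
open scoped BoundedContinuousFunction

section Diagonal

variable {K : Type*} [NormedAddCommGroup K] [InnerProductSpace ℂ K]

theorem eq_of_forall_inner_apply_self_eq {S T : K →L[ℂ] K}
    (h : ∀ ξ, ⟪ξ, S ξ⟫_ℂ = ⟪ξ, T ξ⟫_ℂ) : S = T := by
  refine ContinuousLinearMap.coe_injective ((ext_inner_map _ _).1 fun ξ => ?_)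
  simpa only [ContinuousLinearMap.coe_coe, inner_conj_symm] using congrArg conj (h ξ)

theorem tendsto_inner_apply_of_tendsto_inner_apply_self {ι : Type*} {l : Filter ι}
    {V : ι → K →L[ℂ] K} {U : K →L[ℂ] K}
    (h : ∀ ξ, Tendsto (fun i => ⟪ξ, V i ξ⟫_ℂ) l (𝓝 ⟪ξ, U ξ⟫_ℂ)) (ξ η : K) :
    Tendsto (fun i => ⟪η, V i ξ⟫_ℂ) l (𝓝 ⟪η, U ξ⟫_ℂ) := by
  have conj_tendsto {a b : K} (hab : Tendsto (fun i => ⟪a, V i b⟫_ℂ) l (𝓝 ⟪a, U b⟫_ℂ)) :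
      Tendsto (fun i => ⟪V i b, a⟫_ℂ) l (𝓝 ⟪U b, a⟫_ℂ) := by
    simpa only [Function.comp_def, inner_conj_symm] using
      (Complex.continuous_conj.tendsto _).comp hab
  have polarization (W : K →L[ℂ] K) := inner_map_polarization' (W : K →ₗ[ℂ] K) ξ η
  simp only [ContinuousLinearMap.coe_coe] at polarization
  have hleft : Tendsto (fun i => ⟪V i ξ, η⟫_ℂ) l (𝓝 ⟪U ξ, η⟫_ℂ) := by
    simp only [polarization]
    exact ((((conj_tendsto (h _)).sub (conj_tendsto (h _))).sub
      ((conj_tendsto (h _)).const_mul _)).add ((conj_tendsto (h _)).const_mul _)).div_const _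
  simpa only [Function.comp_def, inner_conj_symm] using
    (Complex.continuous_conj.tendsto _).comp hleft

end Diagonal

namespace IsConjugation

variable {K : Type*} [NormedAddCommGroup K] [InnerProductSpace ℂ K] {C : K → K}

theorem norm_map (hC : IsConjugation C) (ξ : K) : ‖C ξ‖ = ‖ξ‖ := by
  have h := hC.inner_map ξ ξ
  rw [inner_self_eq_norm_sq_to_K, inner_self_eq_norm_sq_to_K, map_pow, RCLike.conj_ofReal] at h
  exact (pow_left_inj₀ (norm_nonneg _) (norm_nonneg _) two_ne_zero).1 (by exact_mod_cast h)

/-- A conjugation as a bounded conjugate-linear operator. -/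
def toContinuousLinearMap (hC : IsConjugation C) : K →L⋆[ℂ] K :=
  LinearMap.mkContinuous ⟨⟨C, hC.map_add⟩, hC.map_smul⟩ 1 fun ξ => by
    simpa using (hC.norm_map ξ).le

theorem inner_map_left (hC : IsConjugation C) (ξ η : K) : ⟪C ξ, η⟫_ℂ = conj ⟪ξ, C η⟫_ℂ := by
  rw [← hC.inner_map, hC.invol]

theorem inner_map_right (hC : IsConjugation C) (ξ η : K) : ⟪ξ, C η⟫_ℂ = conj ⟪C ξ, η⟫_ℂ := by
  rw [← hC.inner_map, hC.invol]

variable [CompleteSpace K]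

/-- The operation `S ↦ S♭ = C ∘ S ∘ C`, a conjugate-linear automorphism of the ring `B(K)` with
involution. -/
noncomputable def flat (hC : IsConjugation C) : (K →L[ℂ] K) ≃⋆+* (K →L[ℂ] K) where
  toFun S := hC.toContinuousLinearMap ∘SL S ∘SL hC.toContinuousLinearMap
  invFun S := hC.toContinuousLinearMap ∘SL S ∘SL hC.toContinuousLinearMap
  left_inv S := by ext ξ; simp [toContinuousLinearMap, hC.invol]
  right_inv S := by ext ξ; simp [toContinuousLinearMap, hC.invol]
  map_add' S T := by ext ξ; simp
  map_mul' S T := by ext ξ; simp [toContinuousLinearMap, hC.invol]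
  map_star' S := by
    refine ContinuousLinearMap.ext fun ξ => ext_inner_left ℂ fun η => ?_
    rw [ContinuousLinearMap.star_eq_adjoint, ContinuousLinearMap.star_eq_adjoint,
      ContinuousLinearMap.adjoint_inner_right]
    change ⟪η, C (ContinuousLinearMap.adjoint S (C ξ))⟫_ℂ = ⟪C (S (C η)), ξ⟫_ℂ
    rw [hC.inner_map_right, ContinuousLinearMap.adjoint_inner_right, hC.inner_map_left]

theorem flat_apply (hC : IsConjugation C) (S : K →L[ℂ] K) (ξ : K) :
    hC.flat S ξ = C (S (C ξ)) := rfl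

theorem flat_algebraMap (hC : IsConjugation C) (z : ℂ) :
    hC.flat (algebraMap ℂ _ z) = algebraMap ℂ _ (conj z) := by
  ext ξ
  simp [flat_apply, Algebra.algebraMap_eq_smul_one, hC.map_smul, hC.invol]

theorem conjSet_spectrum_subset (hC : IsConjugation C) (S : K →L[ℂ] K) :
    conjSet (spectrum ℂ S) ⊆ spectrum ℂ (hC.flat S) := by
  rintro _ ⟨z, hz, rfl⟩
  rwa [spectrum.mem_iff, ← hC.flat_algebraMap, ← map_sub, MulEquiv.isUnit_map, ← spectrum.mem_iff]

end IsConjugation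

/-- A projection-valued measure `P` on `X`, together with its family of scalar measures
`m ξ B = ‖P B ξ‖² = ⟨P B ξ, ξ⟩`. The values of `P` on non-measurable sets carry no information.
Countable additivity of `P` is encoded in that of the measures `m ξ`. -/
structure IsProjectionValuedMeasure {K X : Type*} [NormedAddCommGroup K]
    [InnerProductSpace ℂ K] [CompleteSpace K] [MeasurableSpace X]
    (P : Set X → K →L[ℂ] K) (m : K → Measure X) : Prop where
  isSelfAdjoint : ∀ {B : Set X}, MeasurableSet B → IsSelfAdjoint (P B)
  apply_univ : P Set.univ = 1
  apply_inter : ∀ {A B : Set X}, MeasurableSet A → MeasurableSet B → P (A ∩ B) = P A * P B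
  measure_apply : ∀ (ξ : K) {B : Set X}, MeasurableSet B → m ξ B = ‖P B ξ‖ₑ ^ 2

/-- The operator `T` is the weak integral `∫ f dP` of `f` against a projection-valued measure `P`
with scalar measures `m`. By polarization it suffices to test on the diagonal. -/
def IsSpectralIntegral {K X : Type*} [NormedAddCommGroup K] [InnerProductSpace ℂ K]
    [MeasurableSpace X] (m : K → Measure X) (f : X → ℂ) (T : K →L[ℂ] K) : Prop :=
  ∀ ξ, ⟪ξ, T ξ⟫_ℂ = ∫ x, f x ∂(m ξ)

/-- The integral `∑ c, c • P (g = c)` of a simple function `g` against a projection-valued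
measure `P`. -/
noncomputable def simpleSpectralIntegral {K X : Type*} [NormedAddCommGroup K]
    [InnerProductSpace ℂ K] [MeasurableSpace X] (P : Set X → K →L[ℂ] K) (g : SimpleFunc X ℂ) :
    K →L[ℂ] K :=
  ∑ c ∈ g.range, c • P (g ⁻¹' {c})

namespace IsSpectralIntegral

variable {K X : Type*} [NormedAddCommGroup K] [InnerProductSpace ℂ K] [MeasurableSpace X]
  {m : K → Measure X} {f g : X → ℂ} {T U : K →L[ℂ] K}

theorem add (hT : IsSpectralIntegral m f T) (hU : IsSpectralIntegral m g U)
    (hf : ∀ ξ, Integrable f (m ξ)) (hg : ∀ ξ, Integrable g (m ξ)) :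
    IsSpectralIntegral m (fun x => f x + g x) (T + U) := fun ξ => by
  rw [integral_add (hf ξ) (hg ξ), add_apply, inner_add_right, hT, hU]

theorem const_smul (hT : IsSpectralIntegral m f T) (c : ℂ) :
    IsSpectralIntegral m (fun x => c * f x) (c • T) := fun ξ => by
  rw [integral_const_mul, smul_apply, inner_smul_right, hT]

theorem finset_sum {ι : Type*} {s : Finset ι} {F : ι → X → ℂ} {V : ι → K →L[ℂ] K}
    (hV : ∀ i ∈ s, IsSpectralIntegral m (F i) (V i))
    (hF : ∀ i ∈ s, ∀ ξ, Integrable (F i) (m ξ)) :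
    IsSpectralIntegral m (fun x => ∑ i ∈ s, F i x) (∑ i ∈ s, V i) := fun ξ => by
  rw [integral_finsetSum _ fun i hi => hF i hi ξ, sum_apply, inner_sum]
  exact Finset.sum_congr rfl fun i hi => hV i hi ξ

theorem adjoint [CompleteSpace K] (hT : IsSpectralIntegral m f T) :
    IsSpectralIntegral m (fun x => conj (f x)) (star T) := fun ξ => by
  rw [ContinuousLinearMap.star_eq_adjoint, ContinuousLinearMap.adjoint_inner_right, integral_conj,
    ← hT, inner_conj_symm]

theorem flat [CompleteSpace K] {C : K → K} (hC : IsConjugation C) {σ : X → X}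
    (hσ : Measurable σ) (hf : Measurable f)
    (hT : IsSpectralIntegral m (fun x => conj (f (σ x))) T) :
    IsSpectralIntegral (fun ξ => (m (C ξ)).map σ) f (hC.flat T) := fun ξ => by
  rw [integral_map hσ.aemeasurable hf.aestronglyMeasurable, hC.flat_apply, hC.inner_map_right,
    hT, integral_conj, RCLike.conj_conj]

end IsSpectralIntegral

namespace IsProjectionValuedMeasure

variable {K X : Type*} [NormedAddCommGroup K] [InnerProductSpace ℂ K] [CompleteSpace K]
  [MeasurableSpace X] {P Q : Set X → K →L[ℂ] K} {m n : K → Measure X} {A B : Set X}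

section Projections

theorem apply_mul_self (h : IsProjectionValuedMeasure P m) (hB : MeasurableSet B) :
    P B * P B = P B := by
  rw [← h.apply_inter hB hB, Set.inter_self]

theorem inner_apply_left (h : IsProjectionValuedMeasure P m) (hB : MeasurableSet B) (ξ η : K) :
    ⟪P B ξ, η⟫_ℂ = ⟪ξ, P B η⟫_ℂ :=
  ContinuousLinearMap.isSelfAdjoint_iff_isSymmetric.1 (h.isSelfAdjoint hB) ξ η

theorem isFiniteMeasure (h : IsProjectionValuedMeasure P m) (ξ : K) : IsFiniteMeasure (m ξ) :=
  ⟨by rw [h.measure_apply ξ .univ]; finiteness⟩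

theorem inner_apply_self (h : IsProjectionValuedMeasure P m) (hB : MeasurableSet B) (ξ : K) :
    ⟪ξ, P B ξ⟫_ℂ = (m ξ).real B := by
  rw [← h.apply_mul_self hB, mul_apply_eq_comp, ← h.inner_apply_left hB,
    inner_self_eq_norm_sq_to_K, Measure.real, h.measure_apply ξ hB]
  simp

theorem measure_projection (h : IsProjectionValuedMeasure P m) (hB : MeasurableSet B) (ξ : K) :
    m (P B ξ) = (m ξ).restrict B := by
  ext A hA
  rw [Measure.restrict_apply hA, h.measure_apply _ hA, h.measure_apply _ (hA.inter hB),
    h.apply_inter hA hB, mul_apply_eq_comp]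

theorem apply_empty (h : IsProjectionValuedMeasure P m) : P ∅ = 0 := by
  ext ξ
  simpa using (h.measure_apply ξ .empty).symm

theorem apply_inter_add_apply_sdiff (h : IsProjectionValuedMeasure P m) (hA : MeasurableSet A)
    (hB : MeasurableSet B) : P (A ∩ B) + P (A \ B) = P A := by
  refine eq_of_forall_inner_apply_self_eq fun ξ => ?_
  have := h.isFiniteMeasure ξ
  rw [add_apply, inner_add_right, h.inner_apply_self (hA.inter hB),
    h.inner_apply_self (hA.diff hB), h.inner_apply_self hA,
    ← measureReal_inter_add_sdiff (s := A) hB]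
  norm_cast

theorem apply_eq_apply_iff (h : IsProjectionValuedMeasure P m) (hA : MeasurableSet A)
    (hB : MeasurableSet B) : P A = P B ↔ P (A \ B) = 0 ∧ P (B \ A) = 0 := by
  have apply_sdiff_eq_zero {A B : Set X} (hA : MeasurableSet A) (hB : MeasurableSet B)
      (hAB : P A = P B) : P (A \ B) = 0 := by
    have inter_sdiff : A ∩ (A \ B) = A \ B := Set.inter_eq_right.2 Set.sdiff_subset
    rw [← inter_sdiff, h.apply_inter hA (hA.diff hB), hAB, ← h.apply_inter hB (hA.diff hB),
      Set.inter_sdiff_self, h.apply_empty]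
  refine ⟨fun hAB => ⟨apply_sdiff_eq_zero hA hB hAB, apply_sdiff_eq_zero hB hA hAB.symm⟩,
    fun ⟨hAB, hBA⟩ => ?_⟩
  rw [← h.apply_inter_add_apply_sdiff hA hB, ← h.apply_inter_add_apply_sdiff hB hA, hAB, hBA,
    Set.inter_comm]

end Projections

section Integrals

variable {f g : X → ℂ} {T U : K →L[ℂ] K}

theorem isSpectralIntegral_one (h : IsProjectionValuedMeasure P m) :
    IsSpectralIntegral m (fun _ => 1) (1 : K →L[ℂ] K) := fun ξ => by
  rw [← h.apply_univ, h.inner_apply_self .univ, integral_const, Complex.real_smul, mul_one]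

/-- Since `m (P B ξ) + m (P Bᶜ ξ) = m ξ`, the diagonal of `T` agrees with that of its block-diagonal
part with respect to `P B`. -/
theorem commute_of_isSpectralIntegral (h : IsProjectionValuedMeasure P m)
    (hT : IsSpectralIntegral m f T) (hf : ∀ ξ, Integrable f (m ξ)) (hB : MeasurableSet B) :
    Commute T (P B) := by
  have pinching : P B * T * P B + P Bᶜ * T * P Bᶜ = T := by
    refine eq_of_forall_inner_apply_self_eq fun ξ => ?_
    simp only [add_apply, mul_apply_eq_comp, inner_add_right]
    rw [← h.inner_apply_left hB, ← h.inner_apply_left hB.compl, hT, hT, hT,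
      h.measure_projection hB, h.measure_projection hB.compl, integral_add_compl hB (hf ξ)]
  have compl_mul : P Bᶜ * P B = 0 := by
    rw [← h.apply_inter hB.compl hB, Set.compl_inter_self, h.apply_empty]
  have mul_compl : P B * P Bᶜ = 0 := by
    rw [← h.apply_inter hB hB.compl, Set.inter_compl_self, h.apply_empty]
  rw [commute_iff_eq, ← pinching, add_mul, mul_add]
  simp only [mul_assoc, compl_mul, h.apply_mul_self hB, mul_zero, add_zero]
  simp only [← mul_assoc, mul_compl, h.apply_mul_self hB, zero_mul, add_zero]

theorem isSpectralIntegral_indicator (h : IsProjectionValuedMeasure P m)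
    (hT : IsSpectralIntegral m f T) (hf : ∀ ξ, Integrable f (m ξ)) (hB : MeasurableSet B) :
    IsSpectralIntegral m (B.indicator f) (T * P B) := fun ξ => by
  rw [integral_indicator hB, ← h.measure_projection hB, ← hT, h.inner_apply_left hB,
    ← mul_apply_eq_comp, ← mul_apply_eq_comp,
    ← (h.commute_of_isSpectralIntegral hT hf hB).eq, mul_assoc, h.apply_mul_self hB]

theorem isSpectralIntegral_mul_simpleFunc (h : IsProjectionValuedMeasure P m)
    (hT : IsSpectralIntegral m f T) (hf : ∀ ξ, Integrable f (m ξ)) (g : SimpleFunc X ℂ) :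
    IsSpectralIntegral m (fun x => f x * g x) (T * simpleSpectralIntegral P g) := by
  have hg (c : ℂ) : MeasurableSet (g ⁻¹' {c}) := g.measurableSet_fiber c
  convert IsSpectralIntegral.finset_sum (s := g.range)
    (fun c _ => (h.isSpectralIntegral_indicator hT hf (hg c)).const_smul c)
    (fun c _ ξ => ((hf ξ).indicator (hg c)).const_mul c) using 1
  · ext x
    rw [Finset.sum_eq_single (g x) (fun c _ hc => by simp [hc.symm])
      (fun hx => absurd (g.mem_range_self x) hx)]
    simp [mul_comm]
  · simp only [simpleSpectralIntegral, Finset.mul_sum, mul_smul_comm]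

theorem isSpectralIntegral_simpleFunc (h : IsProjectionValuedMeasure P m) (g : SimpleFunc X ℂ) :
    IsSpectralIntegral m g (simpleSpectralIntegral P g) := by
  have := h.isFiniteMeasure
  simpa only [one_mul] using h.isSpectralIntegral_mul_simpleFunc h.isSpectralIntegral_one
    (fun ξ => integrable_const 1) g

theorem isSpectralIntegral_mul (h : IsProjectionValuedMeasure P m)
    (hT : IsSpectralIntegral m f T) (hf : ∀ ξ, Integrable f (m ξ))
    (hU : IsSpectralIntegral m g U) (hg : Measurable g) {M : ℝ} (hM : ∀ x, ‖g x‖ ≤ M) :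
    IsSpectralIntegral m (fun x => f x * g x) (T * U) := fun ξ => by
  have := h.isFiniteMeasure
  let s := SimpleFunc.approxOn g hg Set.univ 0 (Set.mem_univ _)
  have norm_s_le (k : ℕ) (x : X) : ‖s k x‖ ≤ M + M :=
    (SimpleFunc.norm_approxOn_zero_le hg _ x k).trans (add_le_add (hM x) (hM x))
  have tendsto_s (x : X) : Tendsto (fun k => s k x) atTop (𝓝 (g x)) :=
    SimpleFunc.tendsto_approxOn hg _ (by simp)
  have tendsto_integral {F : X → ℂ} (η : K) (hF : Integrable F (m η)) :
      Tendsto (fun k => ∫ x, F x * s k x ∂(m η)) atTop (𝓝 (∫ x, F x * g x ∂(m η))) := by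
    refine tendsto_integral_of_dominated_convergence (fun x => ‖F x‖ * (M + M))
      (fun k => hF.aestronglyMeasurable.mul (s k).measurable.aestronglyMeasurable)
      (hF.norm.mul_const _) (fun k => ae_of_all _ fun x => ?_)
      (ae_of_all _ fun x => (tendsto_s x).const_mul _)
    rw [norm_mul]
    gcongr
    exact norm_s_le k x
  have tendsto_weakly := tendsto_inner_apply_of_tendsto_inner_apply_self (l := atTop)
      (V := fun k => simpleSpectralIntegral P (s k)) (U := U) fun η => by
    simpa only [h.isSpectralIntegral_simpleFunc _ η, hU η, one_mul] using
      tendsto_integral η (integrable_const 1)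
  refine tendsto_nhds_unique ?_ (tendsto_integral ξ (hf ξ))
  simpa only [← h.isSpectralIntegral_mul_simpleFunc hT hf _ ξ, mul_apply_eq_comp,
    ContinuousLinearMap.adjoint_inner_left] using
    tendsto_weakly ξ (ContinuousLinearMap.adjoint T ξ)

end Integrals

section Uniqueness

variable [TopologicalSpace X]

/-- The bounded continuous functions having the same integral with respect to two
projection-valued measures. -/
def equalIntegralSubalgebra [OpensMeasurableSpace X] (hP : IsProjectionValuedMeasure P m)
    (hQ : IsProjectionValuedMeasure Q n) : StarSubalgebra ℂ (X →ᵇ ℂ) where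
  carrier := {f | ∃ T, IsSpectralIntegral m f T ∧ IsSpectralIntegral n f T}
  mul_mem' := by
    rintro f g ⟨T, hPT, hQT⟩ ⟨U, hPU, hQU⟩
    have := hP.isFiniteMeasure
    have := hQ.isFiniteMeasure
    have hg := g.continuous.measurable
    exact ⟨T * U,
      hP.isSpectralIntegral_mul hPT (fun ξ => f.integrable _) hPU hg g.norm_coe_le_norm,
      hQ.isSpectralIntegral_mul hQT (fun ξ => f.integrable _) hQU hg g.norm_coe_le_norm⟩
  add_mem' := by
    rintro f g ⟨T, hPT, hQT⟩ ⟨U, hPU, hQU⟩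
    have := hP.isFiniteMeasure
    have := hQ.isFiniteMeasure
    exact ⟨T + U, hPT.add hPU (fun ξ => f.integrable _) (fun ξ => g.integrable _),
      hQT.add hQU (fun ξ => f.integrable _) (fun ξ => g.integrable _)⟩
  algebraMap_mem' c := by
    have coe_algebraMap : ⇑(algebraMap ℂ (X →ᵇ ℂ) c) = fun _ => c * 1 := by
      ext x
      rw [BoundedContinuousFunction.algebraMap_apply, smul_eq_mul]
    simp only [Set.mem_ofPred_eq, coe_algebraMap]
    exact ⟨c • 1, hP.isSpectralIntegral_one.const_smul c, hQ.isSpectralIntegral_one.const_smul c⟩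
  star_mem' := fun ⟨T, hPT, hQT⟩ => ⟨star T, hPT.adjoint, hQT.adjoint⟩

variable [PolishSpace X] [BorelSpace X]

theorem measure_eq_of_isSpectralIntegral (hP : IsProjectionValuedMeasure P m)
    (hQ : IsProjectionValuedMeasure Q n) {g : X →ᵇ ℂ} (hg : Function.Injective g)
    {T : K →L[ℂ] K} (hPT : IsSpectralIntegral m g T) (hQT : IsSpectralIntegral n g T) :
    m = n := by
  funext ξ
  have := hP.isFiniteMeasure ξ
  have := hQ.isFiniteMeasure ξ
  refine ext_of_forall_mem_subalgebra_integral_eq_of_polish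
    (A := hP.equalIntegralSubalgebra hQ) ?_ fun f ⟨U, hPU, hQU⟩ => (hPU ξ).symm.trans (hQU ξ)
  intro x y hxy
  exact ⟨g, ⟨BoundedContinuousFunction.toContinuousMapStarₐ ℂ g, ⟨g, ⟨T, hPT, hQT⟩, rfl⟩, rfl⟩,
    hg.ne hxy⟩

theorem apply_eq_of_isSpectralIntegral (hP : IsProjectionValuedMeasure P m)
    (hQ : IsProjectionValuedMeasure Q n) {g : X →ᵇ ℂ} (hg : Function.Injective g)
    {T : K →L[ℂ] K} (hPT : IsSpectralIntegral m g T) (hQT : IsSpectralIntegral n g T)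
    (hB : MeasurableSet B) : P B = Q B :=
  eq_of_forall_inner_apply_self_eq fun ξ => by
    rw [hP.inner_apply_self hB, hQ.inner_apply_self hB,
      hP.measure_eq_of_isSpectralIntegral hQ hg hPT hQT]

end Uniqueness

section Conjugation

variable {C : K → K} {σ : X → X}

theorem flat_preimage (h : IsProjectionValuedMeasure P m) (hC : IsConjugation C)
    (hσ : Measurable σ) :
    IsProjectionValuedMeasure (fun B => hC.flat (P (σ ⁻¹' B))) (fun ξ => (m (C ξ)).map σ) where
  isSelfAdjoint hB := (h.isSelfAdjoint (hσ hB)).map hC.flat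
  apply_univ := by rw [Set.preimage_univ, h.apply_univ, map_one]
  apply_inter hA hB := by rw [Set.preimage_inter, h.apply_inter (hσ hA) (hσ hB), map_mul]
  measure_apply ξ B hB := by
    rw [Measure.map_apply hσ hB, h.measure_apply _ (hσ hB), hC.flat_apply, ← ofReal_norm,
      ← ofReal_norm, hC.norm_map]

theorem flat_apply_preimage [TopologicalSpace X] [PolishSpace X] [BorelSpace X]
    (h : IsProjectionValuedMeasure P m) (hC : IsConjugation C) {S : K →L[ℂ] K}
    (hflat : hC.flat S = S) {g : X →ᵇ ℂ} (hg : Function.Injective g)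
    (hS : IsSpectralIntegral m g S) (hσ : Measurable σ) (hgσ : ∀ x, g (σ x) = conj (g x))
    (hB : MeasurableSet B) : hC.flat (P (σ ⁻¹' B)) = P B := by
  have hS_flat : IsSpectralIntegral (fun ξ => (m (C ξ)).map σ) g S := by
    rw [← hflat]
    refine .flat hC hσ g.continuous.measurable ?_
    simpa only [hgσ, RCLike.conj_conj] using hS
  exact (h.flat_preimage hC hσ).apply_eq_of_isSpectralIntegral h hg hS_flat hS hB

end Conjugation

end IsProjectionValuedMeasure

theorem specInt_self {K : Type*} [NormedAddCommGroup K] [InnerProductSpace ℂ K]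
    {μ : K → Measure ℂ} (hμ : ∀ (c : ℂ) ξ, μ (c • ξ) = ‖c‖ₑ ^ 2 • μ ξ) (f : ℂ → ℂ) (ξ : K) :
    specInt μ f ξ ξ = ∫ z, f z ∂(μ ξ) := by
  have integral_smul (c : ℂ) : ∫ z, f z ∂(μ (c • ξ)) = (‖c‖ ^ 2 : ℝ) • ∫ z, f z ∂(μ ξ) := by
    rw [hμ, integral_smul_measure, ENNReal.toReal_pow, toReal_enorm]
  have integral_zero : ∫ z, f z ∂(μ 0) = 0 := by simpa using integral_smul 0
  have norm_eq : ‖1 - Complex.I‖ = ‖1 + Complex.I‖ := by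
    rw [← RCLike.norm_conj, map_sub, map_one, Complex.conj_I, sub_neg_eq_add]
  have h_add : ξ + ξ = (2 : ℂ) • ξ := (two_smul ℂ ξ).symm
  have h_add_I : ξ + Complex.I • ξ = (1 + Complex.I) • ξ := by rw [add_smul, one_smul]
  have h_sub_I : ξ - Complex.I • ξ = (1 - Complex.I) • ξ := by rw [sub_smul, one_smul]
  rw [specInt, h_add, sub_self ξ, h_add_I, h_sub_I, integral_zero]
  simp only [integral_smul, norm_eq, sub_self, sub_zero, mul_zero, add_zero, RCLike.norm_ofNat,
    Complex.real_smul]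
  push_cast
  ring

section ConjSet

theorem conjSet_eq_preimage (A : Set ℂ) : conjSet A = (fun z => conj z) ⁻¹' A :=
  congrFun (Set.image_eq_preimage_of_inverse Complex.conj_conj Complex.conj_conj) A

theorem conjSet_sdiff_conjSet (A : Set ℂ) : conjSet (A \ conjSet A) = conjSet A \ A := by
  ext z
  simp [conjSet_eq_preimage]

theorem measurableSet_conjSet {A : Set ℂ} (hA : MeasurableSet A) : MeasurableSet (conjSet A) := by
  rw [conjSet_eq_preimage]
  exact Complex.continuous_conj.measurable hA

end ConjSet

namespace IsSpectralMeasure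

variable {K : Type*} [NormedAddCommGroup K] [InnerProductSpace ℂ K] [CompleteSpace K]
  {𝔖 : Set ℂ} {E : Set ℂ → K →L[ℂ] K} {μ : K → Measure ℂ}

theorem measure_apply (hE : IsSpectralMeasure 𝔖 E μ) (ξ : K) {B : Set ℂ} (hB : MeasurableSet B)
    (hB𝔖 : B ⊆ 𝔖) : μ ξ B = ‖E B ξ‖ₑ ^ 2 := by
  have hEB : ⟪ξ, E B ξ⟫_ℂ = ⟪E B ξ, E B ξ⟫_ℂ := by
    conv_lhs => rw [← Set.inter_self B, hE.inter B B hB hB hB𝔖 hB𝔖]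
    exact (ContinuousLinearMap.isSelfAdjoint_iff_isSymmetric.1
      (hE.selfAdjoint B hB hB𝔖) ξ (E B ξ)).symm
  rw [hE.measure_eq ξ B hB hB𝔖, hEB, ← RCLike.re_eq_complex_re, inner_self_eq_norm_sq,
    ENNReal.ofReal_pow (norm_nonneg _), ofReal_norm]

theorem measure_inter (hE : IsSpectralMeasure 𝔖 E μ) (ξ : K) (B : Set ℂ) :
    μ ξ (B ∩ 𝔖) = μ ξ B :=
  measure_inter_conull (hE.measure_compl ξ)

theorem measure_smul (hE : IsSpectralMeasure 𝔖 E μ) (h𝔖 : MeasurableSet 𝔖) (c : ℂ) (ξ : K) :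
    μ (c • ξ) = ‖c‖ₑ ^ 2 • μ ξ := by
  ext B hB
  rw [Measure.smul_apply, ← hE.measure_inter, ← hE.measure_inter ξ,
    hE.measure_apply _ (hB.inter h𝔖) Set.inter_subset_right,
    hE.measure_apply _ (hB.inter h𝔖) Set.inter_subset_right, map_smul, enorm_smul, mul_pow,
    smul_eq_mul]

theorem isProjectionValuedMeasure (hE : IsSpectralMeasure 𝔖 E μ) (h𝔖 : MeasurableSet 𝔖) :
    IsProjectionValuedMeasure (fun B : Set 𝔖 => E (Subtype.val '' B))
      (fun ξ => (μ ξ).comap Subtype.val) where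
  isSelfAdjoint hB := hE.selfAdjoint _ (h𝔖.subtype_image hB) (Subtype.coe_image_subset _ _)
  apply_univ := by rw [Subtype.coe_image_univ, hE.univ]
  apply_inter hA hB := by
    rw [Set.image_inter Subtype.val_injective]
    exact hE.inter _ _ (h𝔖.subtype_image hA) (h𝔖.subtype_image hB)
      (Subtype.coe_image_subset _ _) (Subtype.coe_image_subset _ _)
  measure_apply ξ B hB := by
    rw [comap_subtype_coe_apply h𝔖,
      hE.measure_apply _ (h𝔖.subtype_image hB) (Subtype.coe_image_subset _ _)]

theorem isSpectralIntegral (hE : IsSpectralMeasure 𝔖 E μ) (h𝔖 : MeasurableSet 𝔖) {f : ℂ → ℂ}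
    {T : K →L[ℂ] K} (hT : ∀ ξ η, ⟪η, T ξ⟫_ℂ = specInt μ f ξ η) :
    IsSpectralIntegral (fun ξ => (μ ξ).comap Subtype.val) (fun z : 𝔖 => f z) T := fun ξ => by
  rw [hT, specInt_self (hE.measure_smul h𝔖), integral_subtype_comap h𝔖,
    Measure.restrict_eq_self_of_ae_mem (hE.measure_compl ξ)]

theorem apply_eq_apply_iff (hE : IsSpectralMeasure 𝔖 E μ) (h𝔖 : MeasurableSet 𝔖) {A B : Set ℂ}
    (hA : MeasurableSet A) (hB : MeasurableSet B) (hA𝔖 : A ⊆ 𝔖) (hB𝔖 : B ⊆ 𝔖) :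
    E A = E B ↔ E (A \ B) = 0 ∧ E (B \ A) = 0 := by
  have h := (hE.isProjectionValuedMeasure h𝔖).apply_eq_apply_iff
    (measurable_subtype_coe hA) (measurable_subtype_coe hB)
  simpa only [← Set.preimage_sdiff, Subtype.image_preimage_coe, Set.inter_eq_right.2 hA𝔖,
    Set.inter_eq_right.2 hB𝔖, Set.inter_eq_right.2 (Set.sdiff_subset.trans hA𝔖),
    Set.inter_eq_right.2 (Set.sdiff_subset.trans hB𝔖)] using h

theorem apply_conjSet (hE : IsSpectralMeasure 𝔖 E μ) (h𝔖 : IsCompact 𝔖) (h𝔖conj : conjSet 𝔖 ⊆ 𝔖)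
    {S : K →L[ℂ] K} (hSE : ∀ ξ η, ⟪η, S ξ⟫_ℂ = specInt μ (fun z => z) ξ η) {C : K → K}
    (hC : IsConjugation C) (hflat : hC.flat S = S) {B : Set ℂ} (hB : MeasurableSet B)
    (hB𝔖 : B ⊆ 𝔖) : E (conjSet B) = hC.flat (E B) := by
  have hBc𝔖 : conjSet B ⊆ 𝔖 := (Set.image_mono hB𝔖).trans h𝔖conj
  have := isCompact_iff_compactSpace.1 h𝔖
  have := h𝔖.isClosed.polishSpace
  let σ : 𝔖 → 𝔖 := (Set.mapsTo_iff_image_subset.2 h𝔖conj).restrict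
  have hσ : Measurable σ :=
    (Complex.continuous_conj.measurable.comp measurable_subtype_coe).subtype_mk
  let g : 𝔖 →ᵇ ℂ := BoundedContinuousFunction.mkOfCompact ⟨Subtype.val, continuous_subtype_val⟩
  have hflat_apply := (hE.isProjectionValuedMeasure h𝔖.measurableSet).flat_apply_preimage hC hflat
    (g := g) Subtype.val_injective (hE.isSpectralIntegral h𝔖.measurableSet hSE) hσ (fun _ => rfl)
    (measurable_subtype_coe (measurableSet_conjSet hB))
  have hσ_preimage : σ ⁻¹' (Subtype.val ⁻¹' conjSet B) = Subtype.val ⁻¹' B := by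
    ext z
    simp [σ, conjSet_eq_preimage]
  rw [hσ_preimage, Subtype.image_preimage_coe, Subtype.image_preimage_coe,
    Set.inter_eq_right.2 hB𝔖, Set.inter_eq_right.2 hBc𝔖] at hflat_apply
  exact hflat_apply.symm

end IsSpectralMeasure

theorem conj_invariant_iff_null_difference_general
    {K : Type*} [NormedAddCommGroup K] [InnerProductSpace ℂ K] [CompleteSpace K]
    {C : K → K} (hC : IsConjugation C) (S : K →L[ℂ] K)
    (hflat : ∀ ξ : K, C (S (C ξ)) = S ξ)
    {𝔖 : Set ℂ} (h𝔖 : IsCompact 𝔖) (h𝔖conj : conjSet 𝔖 ⊆ 𝔖)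
    (E : Set ℂ → K →L[ℂ] K) (μ : K → Measure ℂ) (hE : IsSpectralMeasure 𝔖 E μ)
    (hSE : ∀ ξ η : K, ⟪η, S ξ⟫_ℂ = specInt μ (fun z => z) ξ η)
    (A : Set ℂ) (hA : MeasurableSet A) (hA𝔖 : A ⊆ 𝔖) :
    ((∀ ξ : K, C (E A (C ξ)) = E A ξ) ↔ E (conjSet A \ A) = 0) ∧
    (E (conjSet A \ A) = 0 ↔ E (A \ conjSet A) = 0) := by
  have hAc := measurableSet_conjSet hA
  have hAc𝔖 : conjSet A ⊆ 𝔖 := (Set.image_mono hA𝔖).trans h𝔖conj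
  have apply_conjSet {B : Set ℂ} (hB : MeasurableSet B) (hB𝔖 : B ⊆ 𝔖) :
      E (conjSet B) = hC.flat (E B) :=
    hE.apply_conjSet h𝔖 h𝔖conj hSE hC (ContinuousLinearMap.ext hflat) hB hB𝔖
  have ii_iff_iii : E (conjSet A \ A) = 0 ↔ E (A \ conjSet A) = 0 := by
    rw [← conjSet_sdiff_conjSet, apply_conjSet (hA.diff hAc) (Set.sdiff_subset.trans hA𝔖),
      EmbeddingLike.map_eq_zero_iff]
  refine ⟨?_, ii_iff_iii⟩
  calc (∀ ξ, C (E A (C ξ)) = E A ξ)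
    _ ↔ E (conjSet A) = E A := by rw [apply_conjSet hA hA𝔖, ContinuousLinearMap.ext_iff]; rfl
    _ ↔ E (conjSet A \ A) = 0 ∧ E (A \ conjSet A) = 0 :=
      hE.apply_eq_apply_iff h𝔖.measurableSet hAc hA hAc𝔖 hA𝔖
    _ ↔ E (conjSet A \ A) = 0 := by rw [← ii_iff_iii, and_self]

/-- Let `C` be a conjugation on the complex Hilbert space `K`, let `S` be a
bounded normal operator with `S♭ = S`, and let `E` (with diagonal scalar measures `μ`) be the
spectral measure of `S` on `𝔖 = σ(S)`.  For a Borel set `A ⊆ 𝔖` the following are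
equivalent: (i) `C∘E(A)∘C = E(A)`; (ii) `E(A^c \ A) = 0`; (iii) `E(A \ A^c) = 0`. -/
theorem conj_invariant_iff_null_difference
    {K : Type*} [NormedAddCommGroup K] [InnerProductSpace ℂ K] [CompleteSpace K]
    {C : K → K} (hC : IsConjugation C) (S : K →L[ℂ] K)
    (hnormal : (ContinuousLinearMap.adjoint S) ∘L S = S ∘L (ContinuousLinearMap.adjoint S))
    (hflat : ∀ ξ : K, C (S (C ξ)) = S ξ)
    (E : Set ℂ → K →L[ℂ] K) (μ : K → Measure ℂ)
    (hE : IsSpectralMeasure (spectrum ℂ S) E μ)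
    (hSE : ∀ ξ η : K, ⟪η, S ξ⟫_ℂ = specInt μ (fun z => z) ξ η)
    (A : Set ℂ) (hA : MeasurableSet A) (hA𝔖 : A ⊆ spectrum ℂ S) :
    ((∀ ξ : K, C (E A (C ξ)) = E A ξ) ↔ E (conjSet A \ A) = 0) ∧
    (E (conjSet A \ A) = 0 ↔ E (A \ conjSet A) = 0) :=
  conj_invariant_iff_null_difference_general hC S hflat (spectrum.isCompact S)
    ((hC.conjSet_spectrum_subset S).trans_eq (congrArg _ (ContinuousLinearMap.ext hflat)))
    E μ hE hSE A hA hA𝔖
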